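/- Let k ≥ 2 and let f : (k+1)^E → ℝ be a (possibly non-monotone) k-submodular function, let ε ∈ (0,1) and w ∈ ℝ. Let p, q ∈ (k+1)^E with p ⪯ q, let e, u ∈ E with e ∉ supp(q) and u ∉ supp(q), and let i, i* ∈ {1,…,k}. Assume i maximizes the marginal gain at e, i.e., Δ_{e,i'} f(p) ≤ Δ_{e,i} f(p) for every i' ∈ {1,…,k}. If Δ_{e,i} f(p) ≥ w and Δ_{u,i*} f(p) < w/(1−ε), then f(q + i*·1_u) − f(q + i·1_e) < ((2−ε)/(1−ε)) · Δ_{e,i} f(p). -/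

import Mathlib

/-- The support of `p : E → Fin (k+1)`: elements assigned a nonzero label. -/
def kSupp {E : Type*} [Fintype E] [DecidableEq E] {k : ℕ}
    (p : E → Fin (k+1)) : Finset E :=
  Finset.univ.filter (fun e => p e ≠ 0)

/-- The meet `p ⊓ q`. -/
def kInf {E : Type*} {k : ℕ} (p q : E → Fin (k+1)) : E → Fin (k+1) :=
  fun e => if p e = q e then p e else 0

/-- The join `p ⊔ q`. -/
def kSup {E : Type*} {k : ℕ} (p q : E → Fin (k+1)) : E → Fin (k+1) :=
  fun e => if q e = 0 ∨ q e = p e then p e else if p e = 0 then q e else 0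

/-- `f` is `k`-submodular. -/
def IsKSubmodular {E : Type*} {k : ℕ} (f : (E → Fin (k+1)) → ℝ) : Prop :=
  ∀ p q, f (kSup p q) + f (kInf p q) ≤ f p + f q

/-- The partial order `p ⪯ q`. -/
def kLE {E : Type*} {k : ℕ} (p q : E → Fin (k+1)) : Prop :=
  ∀ e, p e ≠ 0 → p e = q e

/-- Marginal gain `Δ_{e,i} f(p) = f(p + i·1_e) − f(p)`. -/
def marg {E : Type*} [DecidableEq E] {k : ℕ}
    (f : (E → Fin (k+1)) → ℝ) (p : E → Fin (k+1)) (e : E) (i : Fin (k+1)) : ℝ :=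
  f (Function.update p e i) - f p

/-- Orthant submodularity. -/
def OrthantSubmodular {E : Type*} [DecidableEq E] {k : ℕ}
    (f : (E → Fin (k+1)) → ℝ) : Prop :=
  ∀ (p q : E → Fin (k+1)) (e : E) (i : Fin (k+1)),
    kLE p q → q e = 0 → i ≠ 0 → marg f q e i ≤ marg f p e i

/-- Pairwise monotonicity. -/
def PairwiseMonotone {E : Type*} [DecidableEq E] {k : ℕ}
    (f : (E → Fin (k+1)) → ℝ) : Prop :=
  ∀ (p : E → Fin (k+1)) (e : E) (i j : Fin (k+1)),
    p e = 0 → i ≠ 0 → j ≠ 0 → i ≠ j → 0 ≤ marg f p e i + marg f p e j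

/-- Monotonicity of `f` with respect to `⪯`. -/
def KMonotone {E : Type*} {k : ℕ} (f : (E → Fin (k+1)) → ℝ) : Prop :=
  ∀ p q, kLE p q → f p ≤ f q

/-!
Split the difference of values as `Δ_{u,j} f(q) - Δ_{e,i} f(q)`. Orthant submodularity bounds the
first term by `Δ_{u,j} f(p)`. Without monotonicity `Δ_{e,i} f(q)` may be negative; since `k ≥ 2`,
there is another label `i'`, and pairwise monotonicity at `q`, orthant submodularity and the greedy
choice of `i` give `-Δ_{e,i} f(q) ≤ Δ_{e,i'} f(q) ≤ Δ_{e,i'} f(p) ≤ Δ_{e,i} f(p)`.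
Finally `(2 - ε) / (1 - ε) = 1 / (1 - ε) + 1`.
-/

section JoinMeet

variable {E : Type*} {k : ℕ} {p q : E → Fin (k + 1)} {e : E} {i j : Fin (k + 1)}

theorem kLE.kSup_eq_right (hpq : kLE p q) : kSup p q = q := by
  funext x
  have := hpq x
  grind [kSup]

theorem kLE.kInf_eq_left (hpq : kLE p q) : kInf p q = p := by
  funext x
  have := hpq x
  grind [kInf]

variable [DecidableEq E]

theorem kSup_update_left (he : q e = 0) :
    kSup (Function.update p e i) q = Function.update (kSup p q) e i := by
  funext x
  obtain rfl | hx := eq_or_ne x e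
  · simp [kSup, he]
  · simp [kSup, hx]

theorem kInf_update_left (he : q e = 0) :
    kInf (Function.update p e i) q = kInf p q := by
  funext x
  obtain rfl | hx := eq_or_ne x e
  · grind [kInf, Function.update_self]
  · simp [kInf, hx]

theorem kSup_update_update (hi : i ≠ 0) (hj : j ≠ 0) (hij : i ≠ j) :
    kSup (Function.update p e i) (Function.update p e j) = Function.update p e 0 := by
  funext x
  obtain rfl | hx := eq_or_ne x e
  · simp [kSup, hi, hj, hij.symm]
  · simp [kSup, hx]

theorem kInf_update_update (hij : i ≠ j) :
    kInf (Function.update p e i) (Function.update p e j) = Function.update p e 0 := by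
  funext x
  obtain rfl | hx := eq_or_ne x e
  · simp [kInf, hij]
  · simp [kInf, hx]

end JoinMeet

section Marginal

variable {E : Type*} [DecidableEq E] {k : ℕ} {f : (E → Fin (k + 1)) → ℝ}

theorem IsKSubmodular.orthantSubmodular (hf : IsKSubmodular f) : OrthantSubmodular f := by
  intro p q e i hpq he _
  have h := hf (Function.update p e i) q
  rw [kSup_update_left he, kInf_update_left he, hpq.kSup_eq_right, hpq.kInf_eq_left] at h
  unfold marg
  linarith

theorem IsKSubmodular.pairwiseMonotone (hf : IsKSubmodular f) : PairwiseMonotone f := by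
  intro p e i j he hi hj hij
  have h := hf (Function.update p e i) (Function.update p e j)
  rw [kSup_update_update hi hj hij, kInf_update_update hij, ← he, Function.update_eq_self] at h
  unfold marg
  linarith

variable {p q : E → Fin (k + 1)} {e u : E} {i j : Fin (k + 1)}

theorem neg_marg_le_marg_of_forall_marg_le (hk : 2 ≤ k)
    (horth : OrthantSubmodular f) (hpair : PairwiseMonotone f)
    (hpq : kLE p q) (he : q e = 0) (hi : i ≠ 0)
    (hmax : ∀ i' : Fin (k + 1), i' ≠ 0 → marg f p e i' ≤ marg f p e i) :
    -marg f q e i ≤ marg f p e i := by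
  obtain ⟨i', hi', hne⟩ : ∃ i', i' ≠ 0 ∧ i' ≠ i :=
    Fin.exists_ne_and_ne_of_two_lt 0 i (by lia)
  calc
    -marg f q e i ≤ marg f q e i' := neg_le_iff_add_nonneg'.mpr (hpair q e i i' he hi hi' hne.symm)
    _ ≤ marg f p e i' := horth p q e i' hpq he hi'
    _ ≤ marg f p e i := hmax i' hi'

theorem IsKSubmodular.update_sub_update_le_marg_add_marg (hf : IsKSubmodular f) (hk : 2 ≤ k)
    (hpq : kLE p q) (he : q e = 0) (hu : q u = 0) (hi : i ≠ 0) (hj : j ≠ 0)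
    (hmax : ∀ i' : Fin (k + 1), i' ≠ 0 → marg f p e i' ≤ marg f p e i) :
    f (Function.update q u j) - f (Function.update q e i) ≤ marg f p u j + marg f p e i := by
  have horth := hf.orthantSubmodular
  calc
    f (Function.update q u j) - f (Function.update q e i) = marg f q u j + -marg f q e i := by
      unfold marg
      ring
    _ ≤ marg f p u j + marg f p e i :=
      add_le_add (horth p q u j hpq hu hj)
        (neg_marg_le_marg_of_forall_marg_le hk horth hf.pairwiseMonotone hpq he hi hmax)

theorem nonmonotone_exchange_step_general (hk : 2 ≤ k) (hf : IsKSubmodular f)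
    {ε w : ℝ} (hε : ε < 1) (hpq : kLE p q) (he : q e = 0) (hu : q u = 0) (hi : i ≠ 0) (hj : j ≠ 0)
    (hmax : ∀ i' : Fin (k + 1), i' ≠ 0 → marg f p e i' ≤ marg f p e i)
    (hw_le : w ≤ marg f p e i) (hlt_w : marg f p u j < w / (1 - ε)) :
    f (Function.update q u j) - f (Function.update q e i)
      < ((2 - ε) / (1 - ε)) * marg f p e i := by
  have hε_pos : 0 < 1 - ε := sub_pos.mpr hε
  calc
    f (Function.update q u j) - f (Function.update q e i)
        ≤ marg f p u j + marg f p e i :=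
      hf.update_sub_update_le_marg_add_marg hk hpq he hu hi hj hmax
    _ < w / (1 - ε) + marg f p e i := by gcongr
    _ ≤ marg f p e i / (1 - ε) + marg f p e i := by gcongr
    _ = ((2 - ε) / (1 - ε)) * marg f p e i := by
      field_simp
      ring

end Marginal

/-- Claim 2, non-monotone case: per-step exchange inequality,
where `i` greedily maximizes the marginal gain at `e`. -/
theorem nonmonotone_exchange_step
    {E : Type*} [Fintype E] [DecidableEq E] {k : ℕ} (hk : 2 ≤ k)
    (f : (E → Fin (k+1)) → ℝ) (hf : IsKSubmodular f)
    (ε w : ℝ) (hε : ε ∈ Set.Ioo (0 : ℝ) 1)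
    (p q : E → Fin (k+1)) (hpq : kLE p q)
    (e u : E) (he : q e = 0) (hu : q u = 0)
    (i j : Fin (k+1)) (hi : i ≠ 0) (hj : j ≠ 0)
    (hmax : ∀ i' : Fin (k+1), i' ≠ 0 → marg f p e i' ≤ marg f p e i)
    (h1 : w ≤ marg f p e i) (h2 : marg f p u j < w / (1 - ε)) :
    f (Function.update q u j) - f (Function.update q e i)
      < ((2 - ε) / (1 - ε)) * marg f p e i :=
  nonmonotone_exchange_step_general hk hf hε.2 hpq he hu hi hj hmax h1 h2
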